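/- Let G be a simple graph with domination number γ(G), let u be a vertex of G, and set D_u = V(G) \ N(u). If |D_u| = γ(G) (so D_u is a minimum dominating set), then D_u \ {u} is an independent set of G, i.e., no two vertices of D_u \ {u} are adjacent in G. -/

import Mathlib

open SimpleGraph Matrix

/-- `S` is a dominating set of `G`: every vertex outside `S` has a neighbor in `S`. -/
def IsDominatingSet {V : Type*} (G : SimpleGraph V) (S : Set V) : Prop :=
  ∀ v : V, v ∉ S → ∃ u ∈ S, G.Adj u v

/-- The domination number of a finite graph: the minimum cardinality of a dominating set. -/
noncomputable def dominationNumber {V : Type*} [Fintype V] (G : SimpleGraph V) : ℕ :=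
  sInf {k : ℕ | ∃ S : Finset V, S.card = k ∧ IsDominatingSet G (S : Set V)}

/-!
In an inclusion-minimal dominating set `S`, a vertex `x` with a neighbor in `S` must dominate some
outside vertex `v` that no other vertex of `S` dominates, since otherwise `S \ {x}` would still be
dominating. When `S` is the complement of `N(u)`, every outside vertex is adjacent to `u ∈ S`,
which forces `x = u`; but `u` has no neighbor in `S`.
-/

section

variable {V : Type*} {G : SimpleGraph V}

theorem dominationNumber_le_card [Fintype V] {S : Finset V}
    (hS : IsDominatingSet G (S : Set V)) : dominationNumber G ≤ S.card :=
  Nat.sInf_le ⟨S, rfl, hS⟩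

theorem IsDominatingSet.minimal_of_card_le_dominationNumber [Fintype V] {S : Finset V}
    (hS : IsDominatingSet G (S : Set V)) (hcard : S.card ≤ dominationNumber G) :
    Minimal (IsDominatingSet G) (S : Set V) := by
  refine ⟨hS, fun T hT hTS ↦ ?_⟩
  lift T to Finset V using T.toFinite
  have hle : S.card ≤ T.card := hcard.trans (dominationNumber_le_card hT)
  exact (Finset.eq_of_subset_of_card_le (Finset.coe_subset.mp hTS) hle).ge

theorem isDominatingSet_compl_neighborSet (u : V) : IsDominatingSet G (G.neighborSet u)ᶜ :=
  fun _ hv ↦ ⟨u, G.notMem_neighborSet_self, not_not.mp hv⟩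

theorem exists_neighborSet_inter_eq_singleton_of_minimal {S : Set V}
    (hS : Minimal (IsDominatingSet G) S) {x y : V} (hx : x ∈ S) (hy : y ∈ S)
    (hxy : G.Adj x y) : ∃ v ∉ S, G.neighborSet v ∩ S = {x} := by
  have hnot : ¬ IsDominatingSet G (S \ {x}) := fun h ↦
    (hS.le_of_le h Set.sdiff_subset hx).2 rfl
  obtain ⟨v, hv, hv_private⟩ : ∃ v ∉ S \ {x}, ∀ w ∈ S \ {x}, ¬ G.Adj w v := by
    simpa only [IsDominatingSet, not_forall, not_exists, not_and, exists_prop] using hnot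
  have hvx : v ≠ x := by
    rintro rfl
    exact hv_private y ⟨hy, hxy.ne'⟩ hxy.symm
  have hvS : v ∉ S := fun h ↦ hv ⟨h, hvx⟩
  have heq {w : V} (hw : w ∈ S) (hwv : G.Adj w v) : w = x :=
    by_contra fun hwx ↦ hv_private w ⟨hw, hwx⟩ hwv
  obtain ⟨w, hw, hwv⟩ := hS.prop v hvS
  refine ⟨v, hvS, Set.eq_singleton_iff_unique_mem.mpr ⟨?_, fun z hz ↦ heq hz.2 hz.1.symm⟩⟩
  exact heq hw hwv ▸ ⟨hwv.symm, hw⟩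

theorem independent_of_minimum_dominating_Du_general {u : V} {D : Set V}
    (hD : D = (G.neighborSet u)ᶜ) (hmin : Minimal (IsDominatingSet G) D) : G.IsIndepSet D := by
  subst hD
  intro x hx y hy _ hxy
  obtain ⟨v, hv, hv_private⟩ := exists_neighborSet_inter_eq_singleton_of_minimal hmin hx hy hxy
  have huv : G.Adj u v := not_not.mp hv
  have hux : u = x := hv_private.subset ⟨huv.symm, G.notMem_neighborSet_self⟩
  exact hy (hux ▸ hxy)

end

theorem independent_of_minimum_dominating_Du
    {V : Type*} [Fintype V] [DecidableEq V] (G : SimpleGraph V) [DecidableRel G.Adj]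
    (u : V) (D : Finset V)
    (hD : D = Finset.univ \ G.neighborFinset u)
    (hcard : D.card = dominationNumber G) :
    ∀ x ∈ D, ∀ y ∈ D, x ≠ u → y ≠ u → ¬ G.Adj x y := by
  have hDu : (D : Set V) = (G.neighborSet u)ᶜ := by simp [hD, Set.compl_eq_univ_sdiff]
  have hdom : IsDominatingSet G (D : Set V) := hDu ▸ isDominatingSet_compl_neighborSet u
  have hindep := independent_of_minimum_dominating_Du_general hDu
    (hdom.minimal_of_card_le_dominationNumber hcard.le)
  exact fun x hx y hy _ _ hxy ↦ hindep hx hy hxy.ne hxy
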